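/- arXiv:1809.09814 — 4 statements merged into one kernel-verified Lean document; each statement's English description precedes it below -/
import Mathlib

section
/- Lemma 5: Suppose x̌ ∈ F is a feasible point of the BMI problem that satisfies the MFCQ condition, and let ε > 0. Then there exists η₀ > 0 such that for all η ≥ η₀ and every optimal solution x* of the penalized problem (P_η), there exists an m×m real symmetric positive semidefinite matrix Λ* such that (x*, Λ*) satisfies the KKT conditions for (P_η) and tr(Λ*)/η ≤ ε. -/
/-!
Comparing an optimal solution `x*` of `(P_η)` with `x̌` gives `η ‖x* - x̌‖ ≤ ‖c‖`. So for large
`η` the point `x*` is close to `x̌`, and by openness of the positive definite cone the MFCQ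
direction `b` of `x̌` satisfies `p(x*, x*x*ᵀ) + ∑ₖ bₖ (Kₖ + δₖ(x*)) ⪯ -μ I` with `μ > 0`
independent of `η`.

First-order optimality says that the gradient `g = c + 2η (x* - x̌)` is nonnegative on every
direction that is strictly feasible for the linearized constraint; the M. Riesz extension theorem
turns this into a multiplier `Λ`. Pairing `Λ` with the inequality above gives
`μ tr Λ ≤ g ⬝ b ≤ 3 ‖c‖ ‖b‖`, a bound that does not depend on `η`.
-/

open Matrix

noncomputable section

/-- Euclidean (ℓ₂) norm of a finite real vector. -/
def vecNorm {k : ℕ} (u : Fin k → ℝ) : ℝ := Real.sqrt (∑ i, u i ^ 2)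

/-- The matrix pencil `p(x, X) = F₀ + ∑ₖ xₖ Kₖ + ∑ᵢ ∑ⱼ Xᵢⱼ Lᵢⱼ`. -/
def pencil {n m : ℕ} (F0 : Matrix (Fin m) (Fin m) ℝ)
    (K : Fin n → Matrix (Fin m) (Fin m) ℝ)
    (L : Fin n → Fin n → Matrix (Fin m) (Fin m) ℝ)
    (x : Fin n → ℝ) (X : Matrix (Fin n) (Fin n) ℝ) : Matrix (Fin m) (Fin m) ℝ :=
  F0 + ∑ k, x k • K k + ∑ i, ∑ j, X i j • L i j

/-- Negative semidefinite real matrix. -/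
def NegSemidef' {k : ℕ} (A : Matrix (Fin k) (Fin k) ℝ) : Prop := (-A).PosSemidef

/-- Negative definite real matrix. -/
def NegDef' {k : ℕ} (A : Matrix (Fin k) (Fin k) ℝ) : Prop := (-A).PosDef

/-- The BMI feasible set `F = {x : p(x, xxᵀ) ⪯ 0}`. -/
def feasSet {n m : ℕ} (F0 : Matrix (Fin m) (Fin m) ℝ)
    (K : Fin n → Matrix (Fin m) (Fin m) ℝ)
    (L : Fin n → Fin n → Matrix (Fin m) (Fin m) ℝ) : Set (Fin n → ℝ) :=
  {x | NegSemidef' (pencil F0 K L x (vecMulVec x x))}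

/-- Feasibility distance `d_F(x) = inf {‖x − a‖₂ : a ∈ F}`. -/
def distF {n m : ℕ} (F0 : Matrix (Fin m) (Fin m) ℝ)
    (K : Fin n → Matrix (Fin m) (Fin m) ℝ)
    (L : Fin n → Fin n → Matrix (Fin m) (Fin m) ℝ) (x : Fin n → ℝ) : ℝ :=
  sInf {r | ∃ a ∈ feasSet F0 K L, r = vecNorm (x - a)}

/-- `δₖ(x) = 2 ∑ᵢ xᵢ L_{k i}`. -/
def deltaMat {n m : ℕ} (L : Fin n → Fin n → Matrix (Fin m) (Fin m) ℝ)
    (k : Fin n) (x : Fin n → ℝ) : Matrix (Fin m) (Fin m) ℝ :=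
  (2 : ℝ) • ∑ i, x i • L k i

/-- The MFCQ condition at a point `x`. -/
def MFCQ {n m : ℕ} (F0 : Matrix (Fin m) (Fin m) ℝ)
    (K : Fin n → Matrix (Fin m) (Fin m) ℝ)
    (L : Fin n → Fin n → Matrix (Fin m) (Fin m) ℝ) (x : Fin n → ℝ) : Prop :=
  ∃ b : Fin n → ℝ,
    NegDef' (pencil F0 K L x (vecMulVec x x) + ∑ k, b k • (K k + deltaMat L k x))

/-- Smallest eigenvalue of a symmetric real matrix, via the Rayleigh quotient. -/
def lambdaMin {k : ℕ} (A : Matrix (Fin k) (Fin k) ℝ) : ℝ :=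
  sInf {r | ∃ u : Fin k → ℝ, vecNorm u = 1 ∧ r = u ⬝ᵥ (A *ᵥ u)}

/-- The G-MFCQ function `s(x)`. -/
def sFun {n m : ℕ} (K : Fin n → Matrix (Fin m) (Fin m) ℝ)
    (L : Fin n → Fin n → Matrix (Fin m) (Fin m) ℝ) (x : Fin n → ℝ) : ℝ :=
  sSup {r | ∃ b : Fin n → ℝ, vecNorm b = 1 ∧
    r = lambdaMin (-(∑ k, b k • (K k + deltaMat L k x)))}

/-- Spectral norm of a real matrix. -/
def specNorm {k : ℕ} (A : Matrix (Fin k) (Fin k) ℝ) : ℝ :=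
  sSup {r | ∃ v : Fin k → ℝ, vecNorm v = 1 ∧ r = vecNorm (A *ᵥ v)}

/-- Pencil norm `‖p‖₂`. -/
def pencilNorm {n m : ℕ} (L : Fin n → Fin n → Matrix (Fin m) (Fin m) ℝ) : ℝ :=
  sSup {r | ∃ u : Fin m → ℝ, vecNorm u = 1 ∧
    r = specNorm (Matrix.of fun i j => u ⬝ᵥ (L i j *ᵥ u))}

/-- Cone `C₁`: positive semidefinite matrices. -/
def coneC1 (n : ℕ) : Set (Matrix (Fin n) (Fin n) ℝ) := {H | H.PosSemidef}

/-- Cone `C₂`: symmetric matrices with `Hᵢᵢ ≥ 0` and `Hᵢᵢ Hⱼⱼ ≥ Hᵢⱼ²`. -/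
def coneC2 (n : ℕ) : Set (Matrix (Fin n) (Fin n) ℝ) :=
  {H | H.IsSymm ∧ ∀ i j, 0 ≤ H i i ∧ H i j ^ 2 ≤ H i i * H j j}

/-- Cone `C₃`: symmetric matrices with `Hᵢᵢ ≥ 0` and `Hᵢᵢ + Hⱼⱼ ≥ 2|Hᵢⱼ|`. -/
def coneC3 (n : ℕ) : Set (Matrix (Fin n) (Fin n) ℝ) :=
  {H | H.IsSymm ∧ ∀ i j, 0 ≤ H i i ∧ 2 * |H i j| ≤ H i i + H j j}

/-- Dual cone with respect to the trace inner product. -/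
def dualCone {n : ℕ} (C : Set (Matrix (Fin n) (Fin n) ℝ)) :
    Set (Matrix (Fin n) (Fin n) ℝ) :=
  {Y | Y.IsSymm ∧ ∀ H ∈ C, 0 ≤ (Y * H).trace}

/-- `α(Λ)` : the n×n matrix with entries `⟨Lᵢⱼ, Λ⟩ = tr(Lᵢⱼ Λ)`. -/
def alphaMat {n m : ℕ} (L : Fin n → Fin n → Matrix (Fin m) (Fin m) ℝ)
    (Λ : Matrix (Fin m) (Fin m) ℝ) : Matrix (Fin n) (Fin n) ℝ :=
  Matrix.of fun i j => (L i j * Λ).trace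

/-- Objective of the penalized problem `(P_η)`. -/
def penObj {n : ℕ} (c xc : Fin n → ℝ) (η : ℝ) (x : Fin n → ℝ) : ℝ :=
  c ⬝ᵥ x + η * vecNorm (x - xc) ^ 2

/-- `x` is an optimal solution of the penalized problem `(P_η)`. -/
def IsOptPen {n m : ℕ} (F0 : Matrix (Fin m) (Fin m) ℝ)
    (K : Fin n → Matrix (Fin m) (Fin m) ℝ)
    (L : Fin n → Fin n → Matrix (Fin m) (Fin m) ℝ)
    (c xc : Fin n → ℝ) (η : ℝ) (x : Fin n → ℝ) : Prop :=
  x ∈ feasSet F0 K L ∧ ∀ y ∈ feasSet F0 K L, penObj c xc η x ≤ penObj c xc η y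

/-- Objective of the penalized convex relaxation `(R_{η,C})`. -/
def relObj {n : ℕ} (c xc : Fin n → ℝ) (η : ℝ) (x : Fin n → ℝ)
    (X : Matrix (Fin n) (Fin n) ℝ) : ℝ :=
  c ⬝ᵥ x + η * (X.trace - 2 * (xc ⬝ᵥ x) + xc ⬝ᵥ xc)

/-- Feasibility for the relaxation with cone `C`. -/
def RelFeasible {n m : ℕ} (F0 : Matrix (Fin m) (Fin m) ℝ)
    (K : Fin n → Matrix (Fin m) (Fin m) ℝ)
    (L : Fin n → Fin n → Matrix (Fin m) (Fin m) ℝ)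
    (C : Set (Matrix (Fin n) (Fin n) ℝ))
    (x : Fin n → ℝ) (X : Matrix (Fin n) (Fin n) ℝ) : Prop :=
  X.IsSymm ∧ NegSemidef' (pencil F0 K L x X) ∧ X - vecMulVec x x ∈ C

/-- `(x, X)` is an optimal solution of the penalized convex relaxation `(R_{η,C})`. -/
def IsOptRel {n m : ℕ} (F0 : Matrix (Fin m) (Fin m) ℝ)
    (K : Fin n → Matrix (Fin m) (Fin m) ℝ)
    (L : Fin n → Fin n → Matrix (Fin m) (Fin m) ℝ)
    (c xc : Fin n → ℝ) (η : ℝ) (C : Set (Matrix (Fin n) (Fin n) ℝ))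
    (x : Fin n → ℝ) (X : Matrix (Fin n) (Fin n) ℝ) : Prop :=
  RelFeasible F0 K L C x X ∧
    ∀ y Y, RelFeasible F0 K L C y Y → relObj c xc η x X ≤ relObj c xc η y Y

/-- The KKT conditions for `(P_η)` at `(x, Λ)`. -/
def KKT {n m : ℕ} (F0 : Matrix (Fin m) (Fin m) ℝ)
    (K : Fin n → Matrix (Fin m) (Fin m) ℝ)
    (L : Fin n → Fin n → Matrix (Fin m) (Fin m) ℝ)
    (c xc : Fin n → ℝ) (η : ℝ)
    (x : Fin n → ℝ) (Λ : Matrix (Fin m) (Fin m) ℝ) : Prop :=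
  Λ.IsSymm ∧ Λ.PosSemidef ∧
  c + (2 * η) • (x - xc) + (∑ k, ((K k * Λ).trace) • (Pi.single k 1 : Fin n → ℝ))
      + (2 : ℝ) • (alphaMat L Λ *ᵥ x) = 0 ∧
  Λ * pencil F0 K L x (vecMulVec x x) = 0

open Filter Topology

theorem nonneg_of_eventually_nonneg_add_mul {a b : ℝ} (h : ∀ᶠ t in 𝓝[>] 0, 0 ≤ a + t * b) :
    0 ≤ a := by
  have hcont : Continuous fun t : ℝ => a + t * b := by fun_prop
  have hlim : Tendsto (fun t : ℝ => a + t * b) (𝓝[>] 0) (𝓝 a) := by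
    simpa using (hcont.tendsto 0).mono_left (nhdsWithin_le_nhds (s := Set.Ioi 0))
  exact ge_of_tendsto hlim h

section RieszExtension

variable {V E : Type*} [AddCommGroup V] [Module ℝ V] [AddCommGroup E] [Module ℝ E]

theorem exists_nonneg_comp_eq_of_forall_nonneg (s : PointedCone ℝ E) (B : V →ₗ[ℝ] E)
    (h : V →ₗ[ℝ] ℝ) (nonneg : ∀ v, B v ∈ s → 0 ≤ h v) (dense : ∀ y, ∃ v, B v + y ∈ s) :
    ∃ f : E →ₗ[ℝ] ℝ, (∀ y ∈ s, 0 ≤ f y) ∧ ∀ v, f (B v) = h v := by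
  have h_eq_zero : ∀ v, B v = 0 → h v = 0 := fun v hv => by
    have hpos : 0 ≤ h v := nonneg v (by simp [hv])
    have hneg : 0 ≤ h (-v) := nonneg (-v) (by simp [hv])
    rw [map_neg] at hneg
    linarith
  obtain ⟨g, hg⟩ := B.rangeRestrict.exists_rightInverse_of_surjective B.range_rangeRestrict
  have hBg (y : B.range) : B (g y) = y := congrArg Subtype.val (LinearMap.congr_fun hg y)
  obtain ⟨f, hf, hfs⟩ := riesz_extension s ⟨B.range, h ∘ₗ g⟩
    (fun y hy => nonneg (g y) (by rwa [hBg])) fun y => by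
      obtain ⟨v, hv⟩ := dense y
      exact ⟨⟨B v, v, rfl⟩, hv⟩
  refine ⟨f, hfs, fun v => ?_⟩
  have hgv : h (g ⟨B v, v, rfl⟩ - v) = 0 := h_eq_zero _ (by rw [map_sub, hBg, sub_self])
  rw [map_sub, sub_eq_zero] at hgv
  exact (hf ⟨B v, v, rfl⟩).trans hgv

end RieszExtension

section PosDef

open scoped ComplexOrder MatrixOrder

variable {𝕜 n : Type*} [RCLike 𝕜]

theorem eventually_posDef [Finite n] {X : Type*} [TopologicalSpace X] {A : X → Matrix n n 𝕜}
    {x₀ : X} (hA : ContinuousAt A x₀) (hherm : ∀ x, (A x).IsHermitian) (hpos : (A x₀).PosDef) :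
    ∀ᶠ x in 𝓝 x₀, (A x).PosDef := by
  have := Fintype.ofFinite n
  have hsphere : ∀ᶠ x in 𝓝 x₀, ∀ u ∈ Metric.sphere (0 : n → 𝕜) 1,
      0 < RCLike.re (star u ⬝ᵥ (A x *ᵥ u)) := by
    refine (isCompact_sphere 0 1).eventually_forall_of_forall_eventually fun u hu => ?_
    have hcont : Continuous fun q : Matrix n n 𝕜 × (n → 𝕜) =>
        RCLike.re (star q.2 ⬝ᵥ (q.1 *ᵥ q.2)) := by fun_prop
    have hu0 : u ≠ 0 := ne_zero_of_mem_unit_sphere (⟨u, hu⟩ : Metric.sphere (0 : n → 𝕜) 1)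
    exact (hcont.continuousAt.comp (x := (x₀, u))
      (hA.fst'.prodMk continuousAt_snd)).eventually_const_lt (hpos.re_dotProduct_pos hu0)
  filter_upwards [hsphere] with x hx
  refine .of_dotProduct_mulVec_pos (hherm x) fun u hu => ?_
  have hunit := hx ((‖u‖⁻¹ : 𝕜) • u) (by simp [norm_smul, hu])
  have hscale : RCLike.re (star ((‖u‖⁻¹ : 𝕜) • u) ⬝ᵥ (A x *ᵥ ((‖u‖⁻¹ : 𝕜) • u)))
      = ‖u‖⁻¹ * (‖u‖⁻¹ * RCLike.re (star u ⬝ᵥ (A x *ᵥ u))) := by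
    rw [mulVec_smul, star_smul, smul_dotProduct, dotProduct_smul, ← RCLike.ofReal_inv,
      RCLike.star_def, RCLike.conj_ofReal, smul_eq_mul, smul_eq_mul, RCLike.re_ofReal_mul,
      RCLike.re_ofReal_mul]
  have hnorm : 0 < ‖u‖⁻¹ := inv_pos.2 (norm_pos_iff.2 hu)
  rw [hscale, mul_pos_iff_of_pos_left hnorm, mul_pos_iff_of_pos_left hnorm] at hunit
  exact RCLike.pos_iff.2 ⟨hunit, (hherm x).im_star_dotProduct_mulVec_self u⟩

theorem eventually_posDef_add_smul [Finite n] {A B : Matrix n n 𝕜} (hA : A.PosDef)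
    (hB : B.IsHermitian) : ∀ᶠ t in 𝓝 (0 : ℝ), (A + t • B).PosDef := by
  have hcont : Continuous fun t : ℝ => A + t • B := by fun_prop
  exact eventually_posDef hcont.continuousAt (fun t => hA.1.add (hB.smul (.all t)))
    (by simpa using hA)

theorem exists_pos_eventually_posDef_sub_smul_one [Finite n] [DecidableEq n] {X : Type*}
    [TopologicalSpace X] {A : X → Matrix n n 𝕜} {x₀ : X} (hA : ContinuousAt A x₀)
    (hherm : ∀ x, (A x).IsHermitian) (hpos : (A x₀).PosDef) :
    ∃ μ > (0 : ℝ), ∀ᶠ x in 𝓝 x₀, (A x - μ • 1).PosDef := by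
  have hcont : ContinuousAt (fun q : ℝ × X => A q.2 - q.1 • (1 : Matrix n n 𝕜)) (0, x₀) :=
    hA.snd'.sub (continuousAt_fst.smul continuousAt_const)
  have hev : ∀ᶠ q : ℝ × X in 𝓝 0 ×ˢ 𝓝 x₀, (A q.2 - q.1 • (1 : Matrix n n 𝕜)).PosDef := by
    rw [← nhds_prod_eq]
    exact eventually_posDef hcont
      (fun q => (hherm q.2).sub (isHermitian_one.smul (.all q.1))) (by simpa using hpos)
  obtain ⟨μ, hμ, hμ0 : 0 < μ⟩ :=
    ((hev.curry.filter_mono (nhdsWithin_le_nhds (s := Set.Ioi 0))).and self_mem_nhdsWithin).exists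
  exact ⟨μ, hμ0, hμ⟩

variable [Fintype n]

theorem trace_mul_nonneg_of_posSemidef {A B : Matrix n n 𝕜} (hA : A.PosSemidef)
    (hB : B.PosSemidef) : 0 ≤ (A * B).trace := by
  classical
  obtain ⟨C, rfl⟩ := CStarAlgebra.nonneg_iff_eq_star_mul_self.mp hA.nonneg
  rw [star_eq_conjTranspose, Matrix.mul_assoc, trace_mul_comm]
  exact (hB.mul_mul_conjTranspose_same C).trace_nonneg

theorem mul_eq_zero_of_posSemidef_of_trace_eq_zero {A B : Matrix n n 𝕜} (hA : A.PosSemidef)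
    (hB : B.PosSemidef) (h : (A * B).trace = 0) : A * B = 0 := by
  classical
  obtain ⟨C, rfl⟩ := CStarAlgebra.nonneg_iff_eq_star_mul_self.mp hA.nonneg
  obtain ⟨D, rfl⟩ := CStarAlgebra.nonneg_iff_eq_star_mul_self.mp hB.nonneg
  simp only [star_eq_conjTranspose] at h ⊢
  have hCD : C * Dᴴ = 0 := by
    rw [← trace_mul_conjTranspose_self_eq_zero_iff, ← h, conjTranspose_mul,
      conjTranspose_conjTranspose, Matrix.mul_assoc Cᴴ, trace_mul_comm Cᴴ]
    simp only [Matrix.mul_assoc]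
  calc Cᴴ * C * (Dᴴ * D) = Cᴴ * (C * Dᴴ) * D := by simp only [Matrix.mul_assoc]
    _ = 0 := by rw [hCD, Matrix.mul_zero, Matrix.zero_mul]

end PosDef

section Multiplier

variable {n V : Type*} [AddCommGroup V] [Module ℝ V]
  {P : Matrix n n ℝ} {D : V →ₗ[ℝ] Matrix n n ℝ} {g : V →ₗ[ℝ] ℝ}

theorem nonneg_of_smul_add_posDef (hP : P.PosSemidef) (hopt : ∀ d, (P + D d).PosDef → 0 ≤ g d)
    {t : ℝ} {d : V} (h : (t • P + D d).PosDef) : 0 ≤ g d := by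
  -- Scale until the coefficient of `P` is at most `1`, then fill it up with a multiple of `P`.
  have hr : 0 < (1 + |t|)⁻¹ := by positivity
  have hrt : 0 ≤ 1 - (1 + |t|)⁻¹ * t := by
    rw [sub_nonneg, inv_mul_le_one₀ (by positivity)]
    linarith [le_abs_self t]
  have hsum := (h.smul hr).add_posSemidef (hP.smul hrt)
  have hscaled : 0 ≤ g ((1 + |t|)⁻¹ • d) :=
    hopt _ (by convert hsum using 1; rw [map_smul]; module)
  rw [map_smul] at hscaled
  exact nonneg_of_mul_nonneg_right hscaled hr

theorem nonneg_of_smul_add_posSemidef (hP : P.PosSemidef) {b : V} (hb : (P + D b).PosDef)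
    (hopt : ∀ d, (P + D d).PosDef → 0 ≤ g d) {t : ℝ} {d : V} (h : (t • P + D d).PosSemidef) :
    0 ≤ g d := by
  have hperturbed (r : ℝ) (hr : 0 < r) : 0 ≤ g d + r * g b := by
    have hsum := (hb.smul hr).posSemidef_add h
    have hnonneg : 0 ≤ g (d + r • b) := nonneg_of_smul_add_posDef hP hopt (t := t + r)
      (by convert hsum using 1; rw [map_add, map_smul]; module)
    simpa using hnonneg
  exact nonneg_of_eventually_nonneg_add_mul (eventually_nhdsWithin_of_forall hperturbed)

/-- The cone of real matrices with positive semidefinite symmetric part. Unlike the cone of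
positive semidefinite matrices, it has interior points in the space of all square matrices, as
the Riesz extension theorem requires. -/
def posSemidefSymmPart (n : Type*) : PointedCone ℝ (Matrix n n ℝ) where
  carrier := {M | (M + Mᵀ).PosSemidef}
  add_mem' {M N} hM hN := by
    simpa only [Set.mem_ofPred_eq, transpose_add, add_add_add_comm] using hM.add hN
  zero_mem' := by simpa using PosSemidef.zero
  smul_mem' t M hM := by
    change ((t : ℝ) • M + ((t : ℝ) • M)ᵀ).PosSemidef
    rw [transpose_smul, ← smul_add]
    exact PosSemidef.smul hM t.2

theorem mem_posSemidefSymmPart {M : Matrix n n ℝ} :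
    M ∈ posSemidefSymmPart n ↔ (M + Mᵀ).PosSemidef :=
  Iff.rfl

theorem mem_posSemidefSymmPart_of_isSymm {M : Matrix n n ℝ} (hM : M.IsSymm) :
    M ∈ posSemidefSymmPart n ↔ M.PosSemidef := by
  rw [mem_posSemidefSymmPart, hM.eq, ← two_smul ℝ]
  exact ⟨fun h => by simpa [smul_smul] using h.smul (inv_nonneg.2 (zero_le_two (α := ℝ))),
    fun h => h.smul zero_le_two⟩

theorem exists_smul_add_mem_posSemidefSymmPart [Finite n] {N : Matrix n n ℝ} (hN : N.PosDef)
    (M : Matrix n n ℝ) : ∃ t : ℝ, t • N + M ∈ posSemidefSymmPart n := by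
  have hsymm : (M + Mᵀ).IsHermitian := by simpa using isHermitian_add_transpose_self M
  have hev : ∀ᶠ s in 𝓝[>] (0 : ℝ), (N + N + s • (M + Mᵀ)).PosDef :=
    (eventually_posDef_add_smul (hN.add hN) hsymm).filter_mono nhdsWithin_le_nhds
  obtain ⟨s, hs, hs0 : 0 < s⟩ := (hev.and self_mem_nhdsWithin).exists
  refine ⟨s⁻¹, ?_⟩
  have hscaled := hs.posSemidef.smul (inv_nonneg.2 hs0.le)
  rw [smul_add, inv_smul_smul₀ hs0.ne'] at hscaled
  rw [mem_posSemidefSymmPart, transpose_add, transpose_smul, (isHermitian_iff_isSymm.1 hN.1).eq,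
    add_add_add_comm, ← smul_add]
  exact hscaled

variable [Fintype n]

theorem trace_mul_of_apply_single {R : Type*} [CommSemiring R] [DecidableEq n]
    (f : Matrix n n R →ₗ[R] R) (M : Matrix n n R) :
    (M * of fun i j => f (single j i 1)).trace = f M := by
  conv_rhs => rw [matrix_eq_sum_single M]
  simp only [trace, diag_apply, mul_apply, of_apply, map_sum]
  refine Finset.sum_congr rfl fun i _ => Finset.sum_congr rfl fun j _ => ?_
  rw [← smul_eq_mul, ← map_smul, smul_single, smul_eq_mul, mul_one]

theorem exists_posSemidef_trace_mul_eq (f : Matrix n n ℝ →ₗ[ℝ] ℝ)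
    (hf : ∀ M ∈ posSemidefSymmPart n, 0 ≤ f M) :
    ∃ Λ : Matrix n n ℝ, Λ.PosSemidef ∧ ∀ M, (M * Λ).trace = f M := by
  classical
  refine ⟨of fun i j => f (single j i 1),
    .of_dotProduct_mulVec_nonneg ?_ fun u => ?_, trace_mul_of_apply_single f⟩
  · have hskew : ∀ i j, 0 ≤ f (single i j 1 - single j i 1) := fun i j =>
      hf _ (by simpa [mem_posSemidefSymmPart] using PosSemidef.zero)
    simp only [map_sub, sub_nonneg] at hskew
    exact isHermitian_iff_isSymm.2 (IsSymm.ext fun i j => le_antisymm (hskew j i) (hskew i j))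
  · have huu : (vecMulVec u u).PosSemidef := by simpa using posSemidef_vecMulVec_self_star u
    have hsymm : (vecMulVec u u).IsSymm := isHermitian_iff_isSymm.1 huu.1
    calc 0 ≤ f (vecMulVec u u) := hf _ ((mem_posSemidefSymmPart_of_isSymm hsymm).2 huu)
      _ = _ := by
        rw [← trace_mul_of_apply_single f, trace_mul_comm, mul_vecMulVec, trace_vecMulVec,
          dotProduct_comm, star_trivial]

theorem exists_posSemidef_multiplier (hP : P.PosSemidef) (hD : ∀ d, (D d).IsSymm) {b : V}
    (hb : (P + D b).PosDef) (hopt : ∀ d, (P + D d).PosDef → 0 ≤ g d) :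
    ∃ Λ : Matrix n n ℝ, Λ.PosSemidef ∧ Λ * P = 0 ∧ ∀ d, (D d * Λ).trace = g d := by
  have hPsymm : P.IsSymm := isHermitian_iff_isSymm.1 hP.1
  -- `(t, d) ↦ t • P + D d` homogenizes the constraint. As `g` ignores `t`, any extension kills `P`.
  obtain ⟨f, hf, hfB⟩ := exists_nonneg_comp_eq_of_forall_nonneg (posSemidefSymmPart n)
    ((LinearMap.toSpanSingleton ℝ (Matrix n n ℝ) P).coprod D) (g ∘ₗ LinearMap.snd ℝ ℝ V)
    (fun ⟨t, d⟩ h => nonneg_of_smul_add_posSemidef hP hb hopt (t := t)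
      ((mem_posSemidefSymmPart_of_isSymm ((hPsymm.smul t).add (hD d))).1 h))
    (fun M => by
      obtain ⟨t, ht⟩ := exists_smul_add_mem_posSemidefSymmPart hb M
      exact ⟨(t, t • b), by simpa using ht⟩)
  obtain ⟨Λ, hΛ, hfΛ⟩ := exists_posSemidef_trace_mul_eq f hf
  have hΛP : (Λ * P).trace = 0 := by
    rw [trace_mul_comm, hfΛ]
    simpa using hfB (1, 0)
  refine ⟨Λ, hΛ, mul_eq_zero_of_posSemidef_of_trace_eq_zero hΛ hP hΛP, fun d => ?_⟩
  rw [hfΛ]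
  simpa using hfB (0, d)

end Multiplier

section Euclidean

variable {k : ℕ} (u v : Fin k → ℝ)

theorem vecNorm_eq_norm_toLp : vecNorm u = ‖WithLp.toLp 2 u‖ := by
  simp [vecNorm, EuclideanSpace.norm_eq]

theorem vecNorm_nonneg : 0 ≤ vecNorm u :=
  Real.sqrt_nonneg _

theorem vecNorm_sq : vecNorm u ^ 2 = u ⬝ᵥ u := by
  rw [vecNorm, Real.sq_sqrt (Finset.sum_nonneg fun i _ => sq_nonneg _)]
  simp only [dotProduct, pow_two]

theorem norm_le_vecNorm : ‖u‖ ≤ vecNorm u := by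
  rw [vecNorm_eq_norm_toLp, pi_norm_le_iff_of_nonneg (norm_nonneg _)]
  exact PiLp.norm_apply_le (WithLp.toLp 2 u)

theorem abs_dotProduct_le_vecNorm_mul_vecNorm : |u ⬝ᵥ v| ≤ vecNorm u * vecNorm v := by
  simpa [vecNorm_eq_norm_toLp, EuclideanSpace.inner_toLp_toLp, dotProduct_comm v]
    using abs_real_inner_le_norm (WithLp.toLp 2 u) (WithLp.toLp 2 v)

end Euclidean

section Pencil

theorem isSymm_sum {ι n R : Type*} [AddCommMonoid R] (s : Finset ι) {A : ι → Matrix n n R}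
    (hA : ∀ i ∈ s, (A i).IsSymm) : (∑ i ∈ s, A i).IsSymm := by
  rw [IsSymm, transpose_sum]
  exact Finset.sum_congr rfl hA

theorem sum_vecMulVec_smul_comm {ι R M : Type*} [Fintype ι] [CommSemiring R] [AddCommMonoid M]
    [Module R M] {L : ι → ι → M} (hL : ∀ i j, L i j = L j i) (x d : ι → R) :
    ∑ i, ∑ j, vecMulVec x d i j • L i j = ∑ i, ∑ j, vecMulVec d x i j • L i j := by
  rw [Finset.sum_comm]
  refine Finset.sum_congr rfl fun i _ => Finset.sum_congr rfl fun j _ => ?_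
  rw [hL j i, vecMulVec_apply, vecMulVec_apply, mul_comm]

variable {n m : ℕ} {F0 : Matrix (Fin m) (Fin m) ℝ} {K : Fin n → Matrix (Fin m) (Fin m) ℝ}
  {L : Fin n → Fin n → Matrix (Fin m) (Fin m) ℝ}

/-- The derivative of `x ↦ p(x, xxᵀ)` at `x`, as a linear map in the direction. -/
def pencilDeriv (K : Fin n → Matrix (Fin m) (Fin m) ℝ)
    (L : Fin n → Fin n → Matrix (Fin m) (Fin m) ℝ) (x : Fin n → ℝ) :
    (Fin n → ℝ) →ₗ[ℝ] Matrix (Fin m) (Fin m) ℝ :=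
  ∑ k, (LinearMap.proj k).smulRight (K k + deltaMat L k x)

theorem pencilDeriv_apply (x d : Fin n → ℝ) :
    pencilDeriv K L x d = ∑ k, d k • (K k + deltaMat L k x) := by
  simp [pencilDeriv]

theorem mfcq_iff {x : Fin n → ℝ} : MFCQ F0 K L x ↔
    ∃ b, (-(pencil F0 K L x (vecMulVec x x) + pencilDeriv K L x b)).PosDef := by
  simp only [MFCQ, NegDef', pencilDeriv_apply]

theorem isSymm_sum_sum_smul (hL : ∀ i j, (L i j).IsSymm) (X : Matrix (Fin n) (Fin n) ℝ) :
    (∑ i, ∑ j, X i j • L i j).IsSymm :=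
  isSymm_sum _ fun i _ => isSymm_sum _ fun j _ => (hL i j).smul _

theorem pencil_isSymm (hF0 : F0.IsSymm) (hK : ∀ k, (K k).IsSymm) (hL : ∀ i j, (L i j).IsSymm)
    (x : Fin n → ℝ) (X : Matrix (Fin n) (Fin n) ℝ) : (pencil F0 K L x X).IsSymm :=
  (hF0.add (isSymm_sum _ fun k _ => (hK k).smul _)).add (isSymm_sum_sum_smul hL X)

theorem pencilDeriv_isSymm (hK : ∀ k, (K k).IsSymm) (hL : ∀ i j, (L i j).IsSymm)
    (x d : Fin n → ℝ) : (pencilDeriv K L x d).IsSymm := by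
  rw [pencilDeriv_apply]
  exact isSymm_sum _ fun k _ =>
    ((hK k).add ((isSymm_sum _ fun i _ => (hL k i).smul _).smul _)).smul _

theorem pencil_add_smul (hLsy : ∀ i j, L i j = L j i) (x d : Fin n → ℝ) (t : ℝ) :
    pencil F0 K L (x + t • d) (vecMulVec (x + t • d) (x + t • d))
      = pencil F0 K L x (vecMulVec x x) + t • pencilDeriv K L x d
        + t ^ 2 • ∑ i, ∑ j, vecMulVec d d i j • L i j := by
  have hquad : ∑ i, ∑ j, vecMulVec (x + t • d) (x + t • d) i j • L i j
      = ∑ i, ∑ j, vecMulVec x x i j • L i j + t • ∑ i, ∑ j, vecMulVec x d i j • L i j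
        + t • ∑ i, ∑ j, vecMulVec d x i j • L i j
        + t ^ 2 • ∑ i, ∑ j, vecMulVec d d i j • L i j := by
    simp only [Finset.smul_sum, ← Finset.sum_add_distrib, smul_smul, ← add_smul]
    refine Finset.sum_congr rfl fun i _ => Finset.sum_congr rfl fun j _ => ?_
    congr 1
    simp only [vecMulVec_apply, Pi.add_apply, Pi.smul_apply, smul_eq_mul]
    ring
  have hlin : ∑ k, (x + t • d) k • K k = ∑ k, x k • K k + t • ∑ k, d k • K k := by
    simp only [Pi.add_apply, Pi.smul_apply, smul_eq_mul, add_smul, Finset.sum_add_distrib,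
      Finset.smul_sum, smul_smul]
  have hderiv : pencilDeriv K L x d
      = ∑ k, d k • K k + (2 : ℝ) • ∑ i, ∑ j, vecMulVec d x i j • L i j := by
    simp only [pencilDeriv_apply, deltaMat, vecMulVec_apply, smul_add, Finset.sum_add_distrib,
      Finset.smul_sum, smul_smul, mul_left_comm]
  rw [pencil, pencil, hquad, hlin, hderiv, sum_vecMulVec_smul_comm hLsy x d]
  module

theorem continuous_neg_pencil_add_pencilDeriv (b : Fin n → ℝ) :
    Continuous fun x => -(pencil F0 K L x (vecMulVec x x) + pencilDeriv K L x b) := by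
  simp only [pencil, pencilDeriv_apply, deltaMat, vecMulVec_apply]
  fun_prop

theorem eventually_add_smul_mem_feasSet (hL : ∀ i j, (L i j).IsSymm)
    (hLsy : ∀ i j, L i j = L j i) {x d : Fin n → ℝ}
    (hx : x ∈ feasSet F0 K L)
    (hd : (-(pencil F0 K L x (vecMulVec x x) + pencilDeriv K L x d)).PosDef) :
    ∀ᶠ t in 𝓝[>] (0 : ℝ), x + t • d ∈ feasSet F0 K L := by
  set P := pencil F0 K L x (vecMulVec x x)
  set Q := ∑ i, ∑ j, vecMulVec d d i j • L i j
  have hP : (-P).PosSemidef := hx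
  have hQ : (-Q).IsHermitian := isHermitian_iff_isSymm.2 (isSymm_sum_sum_smul hL _).neg
  have hpos : ∀ᶠ t in 𝓝[>] (0 : ℝ), (-(P + pencilDeriv K L x d) + t • -Q).PosDef :=
    (eventually_posDef_add_smul hd hQ).filter_mono nhdsWithin_le_nhds
  filter_upwards [hpos, Ioo_mem_nhdsGT zero_lt_one] with t ht ⟨ht0, ht1⟩
  change (-pencil F0 K L (x + t • d) _).PosSemidef
  rw [pencil_add_smul hLsy]
  have hconvex := (hP.smul (sub_nonneg.2 ht1.le)).add (ht.posSemidef.smul ht0.le)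
  convert hconvex using 1
  module

theorem exists_pos_eventually_slater (hF0 : F0.IsSymm) (hK : ∀ k, (K k).IsSymm)
    (hL : ∀ i j, (L i j).IsSymm) {x₀ b : Fin n → ℝ}
    (hb : (-(pencil F0 K L x₀ (vecMulVec x₀ x₀) + pencilDeriv K L x₀ b)).PosDef) :
    ∃ μ > (0 : ℝ), ∀ᶠ x in 𝓝 x₀,
      (-(pencil F0 K L x (vecMulVec x x) + pencilDeriv K L x b) - μ • 1).PosDef :=
  exists_pos_eventually_posDef_sub_smul_one
    (continuous_neg_pencil_add_pencilDeriv b).continuousAt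
    (fun _ => isHermitian_iff_isSymm.2
      ((pencil_isSymm hF0 hK hL _ _).add (pencilDeriv_isSymm hK hL _ _)).neg) hb

theorem trace_deltaMat_mul (Λ : Matrix (Fin m) (Fin m) ℝ) (k : Fin n) (x : Fin n → ℝ) :
    (deltaMat L k x * Λ).trace = 2 * (alphaMat L Λ *ᵥ x) k := by
  simp only [deltaMat, alphaMat, mulVec, dotProduct, of_apply, Matrix.smul_mul, trace_smul,
    Finset.sum_mul, trace_sum, smul_eq_mul, mul_comm]

theorem trace_pencilDeriv_mul (Λ : Matrix (Fin m) (Fin m) ℝ) (x d : Fin n → ℝ) :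
    (pencilDeriv K L x d * Λ).trace
      = ((∑ k, (K k * Λ).trace • (Pi.single k 1 : Fin n → ℝ))
        + (2 : ℝ) • (alphaMat L Λ *ᵥ x)) ⬝ᵥ d := by
  simp only [pencilDeriv_apply, Finset.sum_mul, Matrix.smul_mul, Matrix.add_mul, trace_sum,
    trace_smul, trace_add, trace_deltaMat_mul, add_dotProduct, sum_dotProduct, smul_dotProduct,
    single_one_dotProduct, smul_eq_mul, mul_add, Finset.sum_add_distrib]
  simp only [dotProduct, Finset.mul_sum]
  congr 1 <;> exact Finset.sum_congr rfl fun k _ => by ring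

end Pencil

section Penalized

variable {n m : ℕ} {F0 : Matrix (Fin m) (Fin m) ℝ} {K : Fin n → Matrix (Fin m) (Fin m) ℝ}
  {L : Fin n → Fin n → Matrix (Fin m) (Fin m) ℝ} {c xc x : Fin n → ℝ} {η : ℝ}

/-- The gradient at `x` of the penalized objective `penObj c xc η`. -/
def penGrad (c xc : Fin n → ℝ) (η : ℝ) (x : Fin n → ℝ) : Fin n → ℝ :=
  c + (2 * η) • (x - xc)

theorem penObj_add_smul (d : Fin n → ℝ) (t : ℝ) :
    penObj c xc η (x + t • d)
      = penObj c xc η x + t * (penGrad c xc η x ⬝ᵥ d + t * (η * (d ⬝ᵥ d))) := by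
  simp only [penObj, penGrad, vecNorm_sq, add_sub_right_comm x (t • d) xc, dotProduct_add,
    add_dotProduct, smul_dotProduct, dotProduct_smul, smul_eq_mul, dotProduct_comm d (x - xc)]
  ring

theorem IsOptPen.penGrad_dotProduct_nonneg (hL : ∀ i j, (L i j).IsSymm)
    (hLsy : ∀ i j, L i j = L j i) (hx : IsOptPen F0 K L c xc η x) {d : Fin n → ℝ}
    (hd : (-(pencil F0 K L x (vecMulVec x x) + pencilDeriv K L x d)).PosDef) :
    0 ≤ penGrad c xc η x ⬝ᵥ d := by
  refine nonneg_of_eventually_nonneg_add_mul (b := η * (d ⬝ᵥ d)) ?_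
  filter_upwards [eventually_add_smul_mem_feasSet hL hLsy hx.1 hd, self_mem_nhdsWithin]
    with t hfeas (ht : 0 < t)
  have hmin := hx.2 _ hfeas
  rw [penObj_add_smul, le_add_iff_nonneg_right] at hmin
  exact nonneg_of_mul_nonneg_right hmin ht

theorem kkt_iff {Λ : Matrix (Fin m) (Fin m) ℝ} : KKT F0 K L c xc η x Λ ↔
    Λ.PosSemidef ∧ (∀ d, penGrad c xc η x ⬝ᵥ d + (pencilDeriv K L x d * Λ).trace = 0) ∧
      Λ * pencil F0 K L x (vecMulVec x x) = 0 := by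
  simp only [trace_pencilDeriv_mul, ← add_dotProduct, dotProduct_eq_zero_iff, ← add_assoc]
  exact ⟨fun h => h.2, fun h => ⟨isHermitian_iff_isSymm.1 h.1.1, h⟩⟩

theorem IsOptPen.exists_kkt (hK : ∀ k, (K k).IsSymm) (hL : ∀ i j, (L i j).IsSymm)
    (hLsy : ∀ i j, L i j = L j i) (hx : IsOptPen F0 K L c xc η x) (hmfcq : MFCQ F0 K L x) :
    ∃ Λ, KKT F0 K L c xc η x Λ := by
  obtain ⟨b, hb⟩ := mfcq_iff.1 hmfcq
  obtain ⟨Λ, hΛ, hcompl, hstat⟩ := exists_posSemidef_multiplier hx.1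
    (D := -pencilDeriv K L x) (g := dotProductBilin ℝ ℝ (penGrad c xc η x))
    (fun d => (pencilDeriv_isSymm hK hL x d).neg) (b := b) (by rwa [neg_add] at hb)
    (fun d hd => hx.penGrad_dotProduct_nonneg hL hLsy (by rwa [neg_add]))
  refine ⟨Λ, kkt_iff.2 ⟨hΛ, fun d => ?_, by simpa using hcompl⟩⟩
  simpa [neg_eq_iff_add_eq_zero, add_comm] using hstat d

theorem KKT.mul_trace_le {Λ : Matrix (Fin m) (Fin m) ℝ} (hΛ : KKT F0 K L c xc η x Λ)
    {b : Fin n → ℝ} {μ : ℝ}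
    (hb : (-(pencil F0 K L x (vecMulVec x x) + pencilDeriv K L x b) - μ • 1).PosSemidef) :
    μ * Λ.trace ≤ penGrad c xc η x ⬝ᵥ b := by
  obtain ⟨hpos, hstat, hcompl⟩ := kkt_iff.1 hΛ
  have hpair := trace_mul_nonneg_of_posSemidef hpos hb
  simp only [Matrix.mul_sub, Matrix.mul_neg, Matrix.mul_add, hcompl, zero_add, trace_sub,
    trace_neg, Matrix.mul_smul, Matrix.mul_one, trace_smul, smul_eq_mul] at hpair
  rw [trace_mul_comm] at hpair
  linarith [hstat b]

theorem IsOptPen.mul_vecNorm_sub_le (hx : IsOptPen F0 K L c xc η x)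
    (hxc : xc ∈ feasSet F0 K L) : η * vecNorm (x - xc) ≤ vecNorm c := by
  rcases (vecNorm_nonneg (x - xc)).eq_or_lt with h0 | hpos
  · rw [← h0, mul_zero]
    exact vecNorm_nonneg c
  refine le_of_mul_le_mul_right ?_ hpos
  have hmin := hx.2 xc hxc
  have hcs := neg_le_of_abs_le (abs_dotProduct_le_vecNorm_mul_vecNorm c (x - xc))
  simp only [penObj, sub_self, vecNorm_sq, dotProduct_zero, mul_zero, add_zero] at hmin
  rw [dotProduct_sub] at hcs
  rw [mul_assoc, ← pow_two, vecNorm_sq]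
  linarith

theorem IsOptPen.penGrad_dotProduct_le (hη : 0 ≤ η) (hx : IsOptPen F0 K L c xc η x)
    (hxc : xc ∈ feasSet F0 K L) (b : Fin n → ℝ) :
    penGrad c xc η x ⬝ᵥ b ≤ 3 * vecNorm c * vecNorm b :=
  calc penGrad c xc η x ⬝ᵥ b = c ⬝ᵥ b + 2 * η * ((x - xc) ⬝ᵥ b) := by
        rw [penGrad, add_dotProduct, smul_dotProduct, smul_eq_mul]
    _ ≤ vecNorm c * vecNorm b + 2 * η * (vecNorm (x - xc) * vecNorm b) := by
        gcongr <;> exact le_of_abs_le (abs_dotProduct_le_vecNorm_mul_vecNorm _ _)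
    _ = vecNorm c * vecNorm b + 2 * (η * vecNorm (x - xc)) * vecNorm b := by ring
    _ ≤ vecNorm c * vecNorm b + 2 * vecNorm c * vecNorm b := by
        gcongr
        · exact vecNorm_nonneg b
        · exact hx.mul_vecNorm_sub_le hxc
    _ = 3 * vecNorm c * vecNorm b := by ring

theorem eventually_forall_isOptPen (c : Fin n → ℝ) (hxc : xc ∈ feasSet F0 K L)
    {p : (Fin n → ℝ) → Prop} (hp : ∀ᶠ x in 𝓝 xc, p x) :
    ∀ᶠ η in atTop, ∀ x, IsOptPen F0 K L c xc η x → p x := by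
  obtain ⟨r, hr, hball⟩ := Metric.eventually_nhds_iff.1 hp
  filter_upwards [eventually_gt_atTop 0, eventually_gt_atTop (vecNorm c / r)] with η hη hηr x hx
  refine hball (lt_of_mul_lt_mul_left ?_ hη.le)
  calc η * dist x xc ≤ η * vecNorm (x - xc) := by
        rw [dist_eq_norm]
        gcongr
        exact norm_le_vecNorm _
    _ ≤ vecNorm c := hx.mul_vecNorm_sub_le hxc
    _ < η * r := (div_lt_iff₀ hr).1 hηr

end Penalized

theorem bmi_lemma_five {n m : ℕ} (hn : 0 < n) (hm : 0 < m)
    (F0 : Matrix (Fin m) (Fin m) ℝ)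
    (K : Fin n → Matrix (Fin m) (Fin m) ℝ)
    (L : Fin n → Fin n → Matrix (Fin m) (Fin m) ℝ)
    (hF0 : F0.IsSymm) (hK : ∀ k, (K k).IsSymm)
    (hL : ∀ i j, (L i j).IsSymm) (hLsy : ∀ i j, L i j = L j i)
    (c xc : Fin n → ℝ)
    (hfeas : xc ∈ feasSet F0 K L)
    (hmfcq : MFCQ F0 K L xc)
    (ε : ℝ) (hε : 0 < ε) :
    ∃ η₀ > (0 : ℝ), ∀ η ≥ η₀,
      ∀ xs : Fin n → ℝ, IsOptPen F0 K L c xc η xs →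
        ∃ Λ : Matrix (Fin m) (Fin m) ℝ,
          KKT F0 K L c xc η xs Λ ∧ Λ.trace / η ≤ ε := by
  obtain ⟨b, hb⟩ := mfcq_iff.1 hmfcq
  obtain ⟨μ, hμ, hslater⟩ := exists_pos_eventually_slater hF0 hK hL hb
  suffices hlarge : ∀ᶠ η in atTop, ∀ xs, IsOptPen F0 K L c xc η xs →
      ∃ Λ, KKT F0 K L c xc η xs Λ ∧ Λ.trace / η ≤ ε by
    exact ((eventually_gt_atTop 0).and (eventually_forall_ge_atTop.2 hlarge)).exists
  filter_upwards [eventually_gt_atTop 0, eventually_forall_isOptPen c hfeas hslater,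
    eventually_ge_atTop (3 * vecNorm c * vecNorm b / (μ * ε))] with η hη hnear hηε xs hxs
  have hslater_xs := (hnear xs hxs).posSemidef
  have hmfcq_xs : MFCQ F0 K L xs :=
    mfcq_iff.2 ⟨b, by simpa using (hnear xs hxs).add (PosDef.one.smul hμ)⟩
  obtain ⟨Λ, hΛ⟩ := hxs.exists_kkt hK hL hLsy hmfcq_xs
  refine ⟨Λ, hΛ, (div_le_iff₀ hη).2 (le_of_mul_le_mul_left ?_ hμ)⟩
  calc μ * Λ.trace ≤ penGrad c xc η xs ⬝ᵥ b := hΛ.mul_trace_le hslater_xs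
    _ ≤ 3 * vecNorm c * vecNorm b := hxs.penGrad_dotProduct_le hη.le hfeas b
    _ ≤ η * (μ * ε) := (div_le_iff₀ (mul_pos hμ hε)).1 hηε
    _ = μ * (ε * η) := by ring
end
end

section
/- Lemma 8 (trace bound on the dual certificate implies exactness and uniqueness): Let k ∈ {1,2,3} and set ζ₁ = 1, ζ₂ = 1/(n−1) (assuming n ≥ 2 when k = 2), ζ₃ = 1/√n. Let η > 0, let x* be an optimal solution of the penalized problem (P_η), and let Λ* be an m×m real symmetric positive semidefinite matrix such that (x*, Λ*) satisfies the KKT conditions for (P_η). If ‖p‖₂ · tr(Λ*) < ζₖ · η, then (x*, x* x*ᵀ) is an optimal solution of the penalized convex relaxation (R_{η,Cₖ}) and every optimal solution of (R_{η,Cₖ}) equals (x*, x* x*ᵀ). -/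
/-!
Put `B = η I + α(Λ)`. Up to an affine function of `y`, the Lagrangian of the relaxation at `(y, Y)`
is `⟨B, Y⟩ = ⟨B, Y - y yᵀ⟩ + yᵀ B y`, and stationarity of `xs` completes the square: the Lagrangian
exceeds its value at `(xs, xs xsᵀ)` by `⟨B, Y - y yᵀ⟩ + ⟨B, (y - xs) (y - xs)ᵀ⟩`. Both
`Y - y yᵀ` and `(y - xs) (y - xs)ᵀ` lie in the cone, so the gap is positive away from
`(xs, xs xsᵀ)` as soon as `⟨B, H⟩ > 0` for every nonzero `H` in the cone.

The trace bound provides this positivity. A decomposition of `Λ` into rank-one terms gives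
`‖α(Λ)‖ ≤ ‖p‖₂ tr Λ`, while `|⟨A, H⟩| ≤ ‖A‖ tr H` on `C₁`, and `|⟨A, H⟩| ≤ √n ‖A‖ tr H` on `C₃`
because each row and column of `A` has `ℓ₁` norm at most `√n ‖A‖`. The cone `C₂` equals `C₁` for
`n = 2` and lies in `C₃`, where `√n ≤ n - 1` once `n ≥ 3`.
-/

open Matrix

noncomputable section

section MatrixPairing

variable {ι : Type*} [Fintype ι]

lemma trace_mul_vecMulVec (A : Matrix ι ι ℝ) (u v : ι → ℝ) :
    (A * vecMulVec u v).trace = v ⬝ᵥ (A *ᵥ u) := by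
  rw [mul_vecMulVec, trace_vecMulVec, dotProduct_comm]

lemma trace_mul_nonneg_of_posSemidef_s9 {A H : Matrix ι ι ℝ} (hA : A.PosSemidef)
    (hH : H.PosSemidef) : 0 ≤ (A * H).trace := by
  obtain ⟨r, b, rfl⟩ := posSemidef_iff_eq_sum_vecMulVec.1 hH
  simp only [star_trivial, Matrix.mul_sum, trace_sum, trace_mul_vecMulVec]
  exact Finset.sum_nonneg fun l _ => hA.dotProduct_mulVec_nonneg (b l)

lemma dotProduct_self_eq_norm_sq (u : ι → ℝ) : u ⬝ᵥ u = ‖WithLp.toLp 2 u‖ ^ 2 := by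
  rw [EuclideanSpace.real_norm_sq_eq]
  simp only [dotProduct, pow_two]

lemma dotProduct_mulVec_sub_self {B : Matrix ι ι ℝ} (hB : B.IsSymm)
    (x y : ι → ℝ) :
    (y - x) ⬝ᵥ (B *ᵥ (y - x)) =
      y ⬝ᵥ (B *ᵥ y) - x ⬝ᵥ (B *ᵥ x) - 2 * ((B *ᵥ x) ⬝ᵥ (y - x)) := by
  have hcross : x ⬝ᵥ (B *ᵥ y) = (B *ᵥ x) ⬝ᵥ y := by
    rw [dotProduct_mulVec, ← mulVec_transpose, hB.eq]
  simp only [mulVec_sub, dotProduct_sub, sub_dotProduct, hcross, dotProduct_comm y (B *ᵥ x),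
    dotProduct_comm x (B *ᵥ x)]
  ring

end MatrixPairing

section OperatorNorm

open scoped Matrix.Norms.L2Operator

variable {ι κ : Type*} [Fintype ι] [Fintype κ] [DecidableEq ι]

lemma abs_dotProduct_mulVec_self_le (A : Matrix ι ι ℝ) (u : ι → ℝ) :
    |u ⬝ᵥ (A *ᵥ u)| ≤ ‖A‖ * (u ⬝ᵥ u) := by
  calc |u ⬝ᵥ (A *ᵥ u)|
      = |inner ℝ (WithLp.toLp 2 u) (WithLp.toLp 2 (A *ᵥ u))| := by
        rw [EuclideanSpace.inner_toLp_toLp, star_trivial, dotProduct_comm]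
    _ ≤ ‖WithLp.toLp 2 u‖ * ‖WithLp.toLp 2 (A *ᵥ u)‖ := abs_real_inner_le_norm _ _
    _ ≤ ‖WithLp.toLp 2 u‖ * (‖A‖ * ‖WithLp.toLp 2 u‖) := by
        gcongr
        exact A.l2_opNorm_mulVec (WithLp.toLp 2 u)
    _ = ‖A‖ * (u ⬝ᵥ u) := by rw [dotProduct_self_eq_norm_sq]; ring

lemma sum_abs_col_le_sqrt_card_mul_norm (A : Matrix κ ι ℝ) (j : ι) :
    ∑ i, |A i j| ≤ √(Fintype.card κ) * ‖A‖ := by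
  have hcol : √(∑ i, A i j ^ 2) ≤ ‖A‖ := by
    simpa [EuclideanSpace.norm_eq] using A.l2_opNorm_mulVec (EuclideanSpace.single j 1)
  calc ∑ i, |A i j| = ∑ i, 1 * |A i j| := by simp only [one_mul]
    _ ≤ √(∑ _i : κ, 1 ^ 2) * √(∑ i, |A i j| ^ 2) := Real.sum_mul_le_sqrt_mul_sqrt _ _ _
    _ = √(Fintype.card κ) * √(∑ i, A i j ^ 2) := by simp
    _ ≤ √(Fintype.card κ) * ‖A‖ := by gcongr

lemma sum_abs_row_le_sqrt_card_mul_norm (A : Matrix κ ι ℝ) (i : κ) :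
    ∑ j, |A i j| ≤ √(Fintype.card ι) * ‖A‖ := by
  classical
  simpa [← conjTranspose_eq_transpose_of_trivial, l2_opNorm_conjTranspose] using
    sum_abs_col_le_sqrt_card_mul_norm Aᵀ i

lemma abs_trace_mul_le_of_posSemidef (A : Matrix ι ι ℝ) {H : Matrix ι ι ℝ}
    (hH : H.PosSemidef) : |(A * H).trace| ≤ ‖A‖ * H.trace := by
  obtain ⟨r, b, rfl⟩ := posSemidef_iff_eq_sum_vecMulVec.1 hH
  simp only [star_trivial, Finset.mul_sum, trace_sum, trace_mul_vecMulVec,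
    trace_vecMulVec]
  exact (Finset.abs_sum_le_sum_abs _ _).trans
    (Finset.sum_le_sum fun l _ => abs_dotProduct_mulVec_self_le A (b l))

lemma vecNorm_eq_norm {k : ℕ} (u : Fin k → ℝ) : vecNorm u = ‖WithLp.toLp 2 u‖ := by
  simp [vecNorm, EuclideanSpace.norm_eq]

lemma specNorm_eq_norm {k : ℕ} (A : Matrix (Fin k) (Fin k) ℝ) : specNorm A = ‖A‖ := by
  rw [← l2_opNorm_toEuclideanCLM, ← ContinuousLinearMap.sSup_sphere_eq_norm, specNorm]
  congr 1
  ext r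
  constructor
  · rintro ⟨v, hv, rfl⟩
    exact ⟨WithLp.toLp 2 v, by simpa [vecNorm_eq_norm] using hv, by simp [vecNorm_eq_norm]⟩
  · rintro ⟨v, hv, rfl⟩
    exact ⟨v.ofLp, by simpa [vecNorm_eq_norm] using hv,
      by simp [vecNorm_eq_norm, ← toEuclideanCLM_toLp]⟩

section AlphaMat

variable {n m : ℕ} (L : Fin n → Fin n → Matrix (Fin m) (Fin m) ℝ)

lemma alphaMat_sum {σ : Type*} (s : Finset σ) (Λ : σ → Matrix (Fin m) (Fin m) ℝ) :
    alphaMat L (∑ l ∈ s, Λ l) = ∑ l ∈ s, alphaMat L (Λ l) := by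
  ext i j
  simp [alphaMat, Matrix.mul_sum, trace_sum, Matrix.sum_apply]

lemma alphaMat_smul (a : ℝ) (Λ : Matrix (Fin m) (Fin m) ℝ) :
    alphaMat L (a • Λ) = a • alphaMat L Λ := by
  ext i j
  simp [alphaMat]

lemma alphaMat_vecMulVec (u v : Fin m → ℝ) :
    alphaMat L (vecMulVec u v) = Matrix.of fun i j => v ⬝ᵥ (L i j *ᵥ u) := by
  simp only [alphaMat, trace_mul_vecMulVec]

lemma alphaMat_isSymm (hL : ∀ i j, L i j = L j i) (Λ : Matrix (Fin m) (Fin m) ℝ) :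
    (alphaMat L Λ).IsSymm := by
  ext i j
  simp [alphaMat, hL i j]

lemma norm_alphaMat_vecMulVec_le_pencilNorm {u : Fin m → ℝ} (hu : vecNorm u = 1) :
    ‖alphaMat L (vecMulVec u u)‖ ≤ pencilNorm L := by
  have hcont : Continuous fun w : EuclideanSpace ℝ (Fin m) =>
      ‖alphaMat L (vecMulVec w.ofLp w.ofLp)‖ := by
    unfold alphaMat
    fun_prop
  refine le_csSup (((isCompact_sphere 0 1).bddAbove_image hcont.continuousOn).mono ?_)
    ⟨u, hu, ?_⟩
  · rintro r ⟨w, hw, rfl⟩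
    exact ⟨WithLp.toLp 2 w, by simpa [vecNorm_eq_norm] using hw,
      by simp only [alphaMat_vecMulVec, specNorm_eq_norm]⟩
  · rw [alphaMat_vecMulVec, specNorm_eq_norm]

lemma norm_alphaMat_vecMulVec_self_le (u : Fin m → ℝ) :
    ‖alphaMat L (vecMulVec u u)‖ ≤ pencilNorm L * (u ⬝ᵥ u) := by
  rcases eq_or_ne u 0 with rfl | hu
  · simp [show alphaMat L 0 = 0 by simpa using alphaMat_smul L 0 0]
  obtain ⟨a, w, hw, rfl⟩ : ∃ (a : ℝ) (w : Fin m → ℝ), vecNorm w = 1 ∧ u = a • w := by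
    have hu' : vecNorm u ≠ 0 := by simpa [vecNorm_eq_norm] using hu
    refine ⟨vecNorm u, (vecNorm u)⁻¹ • u, ?_, (smul_inv_smul₀ hu' u).symm⟩
    simp only [vecNorm_eq_norm] at hu' ⊢
    rw [WithLp.toLp_smul, norm_smul, norm_inv, norm_norm, inv_mul_cancel₀ hu']
  calc ‖alphaMat L (vecMulVec (a • w) (a • w))‖
      = a ^ 2 * ‖alphaMat L (vecMulVec w w)‖ := by
        rw [smul_vecMulVec, vecMulVec_smul, smul_smul, alphaMat_smul, norm_smul,
          Real.norm_of_nonneg (mul_self_nonneg a), pow_two]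
    _ ≤ a ^ 2 * pencilNorm L := by
        gcongr
        exact norm_alphaMat_vecMulVec_le_pencilNorm L hw
    _ = pencilNorm L * (a • w ⬝ᵥ a • w) := by
        rw [smul_dotProduct, dotProduct_smul, dotProduct_self_eq_norm_sq, ← vecNorm_eq_norm, hw,
          smul_eq_mul, smul_eq_mul]
        ring

lemma norm_alphaMat_le {Λ : Matrix (Fin m) (Fin m) ℝ} (hΛ : Λ.PosSemidef) :
    ‖alphaMat L Λ‖ ≤ pencilNorm L * Λ.trace := by
  obtain ⟨r, b, rfl⟩ := posSemidef_iff_eq_sum_vecMulVec.1 hΛ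
  simp only [star_trivial, alphaMat_sum, trace_sum, trace_vecMulVec, Finset.mul_sum]
  exact norm_sum_le_of_le _ fun l _ => norm_alphaMat_vecMulVec_self_le L (b l)

end AlphaMat

end OperatorNorm

section Cones

open scoped Matrix.Norms.L2Operator

variable {n : ℕ}

lemma vecMulVec_self_mem_coneC1 (v : Fin n → ℝ) : vecMulVec v v ∈ coneC1 n :=
  posSemidef_vecMulVec_self_star v

lemma coneC1_subset_coneC2 : coneC1 n ⊆ coneC2 n := by
  intro H (hH : H.PosSemidef)
  refine ⟨by simpa using hH.isHermitian, fun i j => ⟨hH.diag_nonneg, ?_⟩⟩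
  have hdet := (hH.submatrix ![i, j]).det_nonneg
  have hsymm : H j i = H i j := hH.isHermitian.apply i j
  rw [det_fin_two] at hdet
  simp only [submatrix_apply, cons_val_zero, cons_val_one, hsymm] at hdet
  linarith [pow_two (H i j)]

lemma coneC2_subset_coneC3 : coneC2 n ⊆ coneC3 n := by
  rintro H ⟨hsymm, hH⟩
  refine ⟨hsymm, fun i j => ⟨(hH i j).1, ?_⟩⟩
  have hi := (hH i i).1
  have hj := (hH j j).1
  rw [← abs_two, ← abs_mul]
  refine abs_le_of_sq_le_sq ?_ (add_nonneg hi hj)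
  nlinarith [(hH i j).2, sq_nonneg (H i i - H j j)]

lemma coneC2_two_subset_coneC1 : coneC2 2 ⊆ coneC1 2 := by
  rintro H ⟨hsymm, hH⟩
  refine .of_dotProduct_mulVec_nonneg (by simpa using hsymm) fun v => ?_
  obtain ⟨h0, hdet⟩ := hH 0 1
  have h1 := (hH 1 0).1
  have hamgm : |2 * (H 0 1 * v 0 * v 1)| ≤ H 0 0 * v 0 ^ 2 + H 1 1 * v 1 ^ 2 := by
    refine abs_le_of_sq_le_sq ?_ (by positivity)
    nlinarith [mul_le_mul_of_nonneg_right hdet (sq_nonneg (v 0 * v 1)),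
      sq_nonneg (H 0 0 * v 0 ^ 2 - H 1 1 * v 1 ^ 2)]
  have hoff : H 1 0 = H 0 1 := hsymm.apply 0 1
  simp only [star_trivial, dotProduct, mulVec, Fin.sum_univ_two, hoff]
  linarith [neg_le_of_abs_le hamgm]

lemma trace_pos_of_mem_coneC3 {H : Matrix (Fin n) (Fin n) ℝ} (hH : H ∈ coneC3 n)
    (hne : H ≠ 0) : 0 < H.trace := by
  have hdiag : ∀ i ∈ Finset.univ, 0 ≤ H i i := fun i _ => (hH.2 i i).1
  refine (Finset.sum_nonneg hdiag).lt_of_ne' fun htr => hne ?_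
  have hzero : ∀ i, H i i = 0 := fun i =>
    (Finset.sum_eq_zero_iff_of_nonneg hdiag).1 htr i (Finset.mem_univ i)
  ext i j
  have hij := (hH.2 i j).2
  rw [hzero i, hzero j] at hij
  exact abs_nonpos_iff.1 (by linarith)

lemma abs_trace_mul_le_of_mem_coneC3 (A : Matrix (Fin n) (Fin n) ℝ)
    {H : Matrix (Fin n) (Fin n) ℝ} (hH : H ∈ coneC3 n) :
    |(A * H).trace| ≤ √n * ‖A‖ * H.trace := by
  have hentry (i j : Fin n) : |A i j * H j i| ≤ |A i j| * H i i / 2 + |A i j| * H j j / 2 := by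
    rw [abs_mul]
    nlinarith [abs_nonneg (A i j), (hH.2 j i).2]
  have hrow (i : Fin n) : ∑ j, |A i j| ≤ √n * ‖A‖ := by
    simpa using sum_abs_row_le_sqrt_card_mul_norm A i
  have hcol (j : Fin n) : ∑ i, |A i j| ≤ √n * ‖A‖ := by
    simpa using sum_abs_col_le_sqrt_card_mul_norm A j
  calc |(A * H).trace|
      = |∑ i, ∑ j, A i j * H j i| := rfl
    _ ≤ ∑ i, ∑ j, |A i j * H j i| :=
        (Finset.abs_sum_le_sum_abs _ _).trans
          (Finset.sum_le_sum fun i _ => Finset.abs_sum_le_sum_abs _ _)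
    _ ≤ ∑ i, ∑ j, (|A i j| * H i i / 2 + |A i j| * H j j / 2) := by
        gcongr with i _ j _
        exact hentry i j
    _ = ∑ i, (∑ j, |A i j|) * (H i i / 2) + ∑ j, (∑ i, |A i j|) * (H j j / 2) := by
        simp only [Finset.sum_add_distrib, Finset.sum_mul, mul_div_assoc]
        rw [Finset.sum_comm (f := fun i j => |A i j| * (H j j / 2))]
    _ ≤ ∑ i, √n * ‖A‖ * (H i i / 2) + ∑ j, √n * ‖A‖ * (H j j / 2) := by
        have hdiag (i : Fin n) : 0 ≤ H i i / 2 := div_nonneg (hH.2 i i).1 two_pos.le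
        exact add_le_add
          (Finset.sum_le_sum fun i _ => mul_le_mul_of_nonneg_right (hrow i) (hdiag i))
          (Finset.sum_le_sum fun j _ => mul_le_mul_of_nonneg_right (hcol j) (hdiag j))
    _ = √n * ‖A‖ * H.trace := by
        rw [← Finset.sum_add_distrib, trace, Finset.mul_sum]
        exact Finset.sum_congr rfl fun i _ => by rw [diag_apply]; ring

/-- The matrices whose trace pairing with every nonzero element of `C` is positive. The symmetric
ones form the interior of `dualCone C` when `C` is a closed cone of symmetric matrices; membership
of the quadratic part of the Lagrangian makes the relaxation exact. -/
def strictDualCone (C : Set (Matrix (Fin n) (Fin n) ℝ)) : Set (Matrix (Fin n) (Fin n) ℝ) :=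
  {B | ∀ H ∈ C, H ≠ 0 → 0 < (B * H).trace}

lemma smul_one_add_mem_strictDualCone {C : Set (Matrix (Fin n) (Fin n) ℝ)}
    (hC : C ⊆ coneC3 n) {A : Matrix (Fin n) (Fin n) ℝ} {σ η : ℝ} (hση : σ < η)
    (hA : ∀ H ∈ C, |(A * H).trace| ≤ σ * H.trace) : η • 1 + A ∈ strictDualCone C := by
  intro H hH hne
  have htr := trace_pos_of_mem_coneC3 (hC hH) hne
  rw [Matrix.add_mul, smul_one_mul, trace_add, trace_smul, smul_eq_mul]
  nlinarith [neg_le_of_abs_le (hA H hH)]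

lemma smul_one_add_mem_strictDualCone_coneC1 {A : Matrix (Fin n) (Fin n) ℝ} {η : ℝ}
    (hA : ‖A‖ < η) : η • 1 + A ∈ strictDualCone (coneC1 n) :=
  smul_one_add_mem_strictDualCone (coneC1_subset_coneC2.trans coneC2_subset_coneC3) hA
    fun _ hH => abs_trace_mul_le_of_posSemidef A hH

lemma smul_one_add_mem_strictDualCone_coneC3 {A : Matrix (Fin n) (Fin n) ℝ} {η : ℝ}
    (hA : √n * ‖A‖ < η) : η • 1 + A ∈ strictDualCone (coneC3 n) :=
  smul_one_add_mem_strictDualCone subset_rfl hA fun _ hH => abs_trace_mul_le_of_mem_coneC3 A hH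

lemma strictDualCone_anti {C D : Set (Matrix (Fin n) (Fin n) ℝ)} (hCD : C ⊆ D) :
    strictDualCone D ⊆ strictDualCone C :=
  fun _ hB H hH => hB H (hCD hH)

lemma smul_one_add_mem_strictDualCone_coneC2 (hn : 2 ≤ n) {A : Matrix (Fin n) (Fin n) ℝ} {η : ℝ}
    (hA : (n - 1) * ‖A‖ < η) : η • 1 + A ∈ strictDualCone (coneC2 n) := by
  obtain rfl | hn3 : n = 2 ∨ 3 ≤ n := by omega
  · refine strictDualCone_anti coneC2_two_subset_coneC1
      (smul_one_add_mem_strictDualCone_coneC1 ?_)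
    norm_num at hA
    exact hA
  · refine strictDualCone_anti coneC2_subset_coneC3
      (smul_one_add_mem_strictDualCone_coneC3 (lt_of_le_of_lt ?_ hA))
    have hn3' : (3 : ℝ) ≤ n := by exact_mod_cast hn3
    gcongr
    exact Real.sqrt_le_iff.2 ⟨by linarith, by nlinarith⟩

lemma smul_one_add_mem_strictDualCone_of_norm_lt (hn : 0 < n) {k : Fin 3} (hn2 : k = 1 → 2 ≤ n)
    {ζ η : ℝ} (hζ : ζ = if k = 0 then 1 else if k = 1 then 1 / ((n : ℝ) - 1)
      else 1 / √(n : ℝ))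
    {C : Set (Matrix (Fin n) (Fin n) ℝ)}
    (hC : C = if k = 0 then coneC1 n else if k = 1 then coneC2 n else coneC3 n)
    {A : Matrix (Fin n) (Fin n) ℝ} (hA : ‖A‖ < ζ * η) :
    coneC1 n ⊆ C ∧ η • 1 + A ∈ strictDualCone C := by
  obtain rfl | rfl | rfl : k = 0 ∨ k = 1 ∨ k = 2 := by omega
  · obtain rfl : C = coneC1 n := by simpa using hC
    obtain rfl : ζ = 1 := by simpa using hζ
    exact ⟨subset_rfl, smul_one_add_mem_strictDualCone_coneC1 (by rwa [one_mul] at hA)⟩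
  · obtain rfl : C = coneC2 n := by simpa using hC
    obtain rfl : ζ = 1 / ((n : ℝ) - 1) := by simpa using hζ
    have hn1 : (0 : ℝ) < n - 1 := sub_pos.2 (Nat.one_lt_cast.2 (hn2 rfl))
    rw [one_div, ← div_eq_inv_mul, lt_div_iff₀' hn1] at hA
    exact ⟨coneC1_subset_coneC2, smul_one_add_mem_strictDualCone_coneC2 (hn2 rfl) hA⟩
  · obtain rfl : C = coneC3 n := by simpa using hC
    obtain rfl : ζ = 1 / √(n : ℝ) := by simpa using hζ
    have hsqrt : 0 < √(n : ℝ) := Real.sqrt_pos.2 (Nat.cast_pos.2 hn)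
    rw [one_div, ← div_eq_inv_mul, lt_div_iff₀' hsqrt] at hA
    exact ⟨coneC1_subset_coneC2.trans coneC2_subset_coneC3,
      smul_one_add_mem_strictDualCone_coneC3 hA⟩

end Cones

section Lagrangian

variable {n m : ℕ} {F0 : Matrix (Fin m) (Fin m) ℝ} {K : Fin n → Matrix (Fin m) (Fin m) ℝ}
  {L : Fin n → Fin n → Matrix (Fin m) (Fin m) ℝ} {c xc : Fin n → ℝ} {η : ℝ}
  {Λ : Matrix (Fin m) (Fin m) ℝ} {xs y : Fin n → ℝ} {Y : Matrix (Fin n) (Fin n) ℝ}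
  {C : Set (Matrix (Fin n) (Fin n) ℝ)}

lemma trace_pencil_mul (hLsy : ∀ i j, L i j = L j i) :
    (pencil F0 K L y Y * Λ).trace =
      (F0 * Λ).trace + (fun k => (K k * Λ).trace) ⬝ᵥ y + (alphaMat L Λ * Y).trace := by
  have hlin : (fun k => (K k * Λ).trace) ⬝ᵥ y = ∑ k, y k * (K k * Λ).trace :=
    dotProduct_comm _ _
  have hquad : (alphaMat L Λ * Y).trace = ∑ i, ∑ j, Y i j * (L i j * Λ).trace := by
    rw [← (alphaMat_isSymm L hLsy Λ).eq, trace_mul_comm]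
    rfl
  rw [hlin, hquad]
  simp only [pencil, Matrix.add_mul, Finset.sum_mul, smul_mul, trace_add, trace_sum, trace_smul,
    smul_eq_mul]

/-- The Lagrangian of `(R_{η,C})` in which the matrix inequality `p(x, X) ⪯ 0` is dualized with
multiplier `Λ` and the conic constraint `X - x xᵀ ∈ C` is kept. -/
def relLagrangian (F0 : Matrix (Fin m) (Fin m) ℝ) (K : Fin n → Matrix (Fin m) (Fin m) ℝ)
    (L : Fin n → Fin n → Matrix (Fin m) (Fin m) ℝ) (c xc : Fin n → ℝ) (η : ℝ)
    (Λ : Matrix (Fin m) (Fin m) ℝ) (x : Fin n → ℝ) (X : Matrix (Fin n) (Fin n) ℝ) : ℝ :=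
  relObj c xc η x X + (pencil F0 K L x X * Λ).trace

lemma relLagrangian_eq (hLsy : ∀ i j, L i j = L j i) :
    relLagrangian F0 K L c xc η Λ y Y =
      ((η • 1 + alphaMat L Λ) * Y).trace
        + (c - (2 * η) • xc + fun k => (K k * Λ).trace) ⬝ᵥ y
        + (η * (xc ⬝ᵥ xc) + (F0 * Λ).trace) := by
  simp only [relLagrangian, relObj, trace_pencil_mul hLsy, Matrix.add_mul, smul_one_mul,
    trace_add, trace_smul, add_dotProduct, sub_dotProduct, smul_dotProduct, smul_eq_mul]
  ring

lemma relLagrangian_le_relObj (hΛ : Λ.PosSemidef) (hy : NegSemidef' (pencil F0 K L y Y)) :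
    relLagrangian F0 K L c xc η Λ y Y ≤ relObj c xc η y Y := by
  have hpair := trace_mul_nonneg_of_posSemidef_s9 hy hΛ
  rw [Matrix.neg_mul, trace_neg] at hpair
  unfold relLagrangian
  linarith

lemma KKT.relLagrangian_eq_relObj (hKKT : KKT F0 K L c xc η xs Λ) :
    relLagrangian F0 K L c xc η Λ xs (vecMulVec xs xs) = relObj c xc η xs (vecMulVec xs xs) := by
  rw [relLagrangian, trace_mul_comm, hKKT.2.2.2, trace_zero, add_zero]

lemma KKT.linear_part_eq (hKKT : KKT F0 K L c xc η xs Λ) :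
    (c - (2 * η) • xc + fun k => (K k * Λ).trace) =
      -(2 : ℝ) • ((η • 1 + alphaMat L Λ) *ᵥ xs) := by
  have hstat := hKKT.2.2.1
  rw [← pi_eq_sum_univ'] at hstat
  rw [add_mulVec, smul_mulVec, one_mulVec]
  ext i
  have hi := congrFun hstat i
  simp only [Pi.add_apply, Pi.sub_apply, Pi.smul_apply, Pi.zero_apply, smul_eq_mul] at hi ⊢
  linarith

lemma KKT.relLagrangian_sub (hLsy : ∀ i j, L i j = L j i) (hKKT : KKT F0 K L c xc η xs Λ) :
    relLagrangian F0 K L c xc η Λ y Y - relLagrangian F0 K L c xc η Λ xs (vecMulVec xs xs) =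
      ((η • 1 + alphaMat L Λ) * (Y - vecMulVec y y)).trace
        + ((η • 1 + alphaMat L Λ) * vecMulVec (y - xs) (y - xs)).trace := by
  have hB : (η • 1 + alphaMat L Λ).IsSymm :=
    (isSymm_one.smul η).add (alphaMat_isSymm L hLsy Λ)
  rw [trace_mul_vecMulVec, dotProduct_mulVec_sub_self hB]
  simp only [relLagrangian_eq hLsy, hKKT.linear_part_eq, Matrix.mul_sub, trace_sub,
    trace_mul_vecMulVec, smul_dotProduct, dotProduct_sub, smul_eq_mul]
  ring

lemma RelFeasible.relObj_lt (hLsy : ∀ i j, L i j = L j i) (hKKT : KKT F0 K L c xc η xs Λ)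
    (hC : coneC1 n ⊆ C) (hB : η • 1 + alphaMat L Λ ∈ strictDualCone C)
    (hy : RelFeasible F0 K L C y Y) (hne : (y, Y) ≠ (xs, vecMulVec xs xs)) :
    relObj c xc η xs (vecMulVec xs xs) < relObj c xc η y Y := by
  have hnonneg {H : Matrix (Fin n) (Fin n) ℝ} (hH : H ∈ C) :
      0 ≤ ((η • 1 + alphaMat L Λ) * H).trace := by
    rcases eq_or_ne H 0 with rfl | hH0
    · simp
    · exact (hB H hH hH0).le
  have hv : vecMulVec (y - xs) (y - xs) ∈ C := hC (vecMulVec_self_mem_coneC1 _)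
  have hgap : relLagrangian F0 K L c xc η Λ xs (vecMulVec xs xs) <
      relLagrangian F0 K L c xc η Λ y Y := by
    rw [← sub_pos, hKKT.relLagrangian_sub hLsy]
    rcases eq_or_ne y xs with rfl | hyne
    · have hY : Y - vecMulVec y y ≠ 0 := sub_ne_zero.2 fun h => hne (by rw [h])
      exact add_pos_of_pos_of_nonneg (hB _ hy.2.2 hY) (hnonneg hv)
    · have hv0 : vecMulVec (y - xs) (y - xs) ≠ 0 :=
        vecMulVec_ne_zero (sub_ne_zero.2 hyne) (sub_ne_zero.2 hyne)
      exact add_pos_of_nonneg_of_pos (hnonneg hy.2.2) (hB _ hv hv0)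
  calc relObj c xc η xs (vecMulVec xs xs)
      = relLagrangian F0 K L c xc η Λ xs (vecMulVec xs xs) := hKKT.relLagrangian_eq_relObj.symm
    _ < relLagrangian F0 K L c xc η Λ y Y := hgap
    _ ≤ relObj c xc η y Y := relLagrangian_le_relObj hKKT.2.1 hy.2.1

lemma relFeasible_vecMulVec_self (hxs : xs ∈ feasSet F0 K L) (hC : coneC1 n ⊆ C) :
    RelFeasible F0 K L C xs (vecMulVec xs xs) :=
  ⟨transpose_vecMulVec xs xs, hxs, by rw [sub_self]; exact hC PosSemidef.zero⟩

theorem isOptRel_iff_of_mem_strictDualCone (hLsy : ∀ i j, L i j = L j i)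
    (hxs : xs ∈ feasSet F0 K L) (hKKT : KKT F0 K L c xc η xs Λ)
    (hC : coneC1 n ⊆ C) (hB : η • 1 + alphaMat L Λ ∈ strictDualCone C) :
    IsOptRel F0 K L c xc η C y Y ↔ y = xs ∧ Y = vecMulVec xs xs := by
  have hfeas := relFeasible_vecMulVec_self hxs hC
  have hlt {z : Fin n → ℝ} {Z} (hz : RelFeasible F0 K L C z Z) := hz.relObj_lt hLsy hKKT hC hB
  constructor
  · intro hopt
    by_contra hne
    exact (hopt.2 xs _ hfeas).not_gt (hlt hopt.1 (by rwa [Ne, Prod.mk.injEq]))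
  · rintro ⟨rfl, rfl⟩
    refine ⟨hfeas, fun z Z hz => ?_⟩
    by_cases heq : (z, Z) = (y, vecMulVec y y)
    · obtain ⟨rfl, rfl⟩ := Prod.mk.inj heq
      exact le_rfl
    · exact (hlt hz heq).le

end Lagrangian

theorem bmi_lemma_eight_general {n m : ℕ} (hn : 0 < n)
    {F0 : Matrix (Fin m) (Fin m) ℝ} {K : Fin n → Matrix (Fin m) (Fin m) ℝ}
    {L : Fin n → Fin n → Matrix (Fin m) (Fin m) ℝ} (hLsy : ∀ i j, L i j = L j i)
    {c xc : Fin n → ℝ} {k : Fin 3} (hn2 : k = 1 → 2 ≤ n) {ζ : ℝ}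
    (hζ : ζ = if k = 0 then 1 else if k = 1 then 1 / ((n : ℝ) - 1)
          else 1 / √(n : ℝ))
    {C : Set (Matrix (Fin n) (Fin n) ℝ)}
    (hC : C = if k = 0 then coneC1 n else if k = 1 then coneC2 n else coneC3 n)
    {η : ℝ} {xs : Fin n → ℝ} (hxs : xs ∈ feasSet F0 K L)
    {Λ : Matrix (Fin m) (Fin m) ℝ} (hKKT : KKT F0 K L c xc η xs Λ)
    (hbound : pencilNorm L * Λ.trace < ζ * η) :
    IsOptRel F0 K L c xc η C xs (vecMulVec xs xs) ∧
    ∀ y Y, IsOptRel F0 K L c xc η C y Y → y = xs ∧ Y = vecMulVec xs xs := by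
  obtain ⟨hC1, hB⟩ := smul_one_add_mem_strictDualCone_of_norm_lt hn hn2 hζ hC
    ((norm_alphaMat_le L hKKT.2.1).trans_lt hbound)
  have hiff {y Y} : IsOptRel F0 K L c xc η C y Y ↔ y = xs ∧ Y = vecMulVec xs xs :=
    isOptRel_iff_of_mem_strictDualCone hLsy hxs hKKT hC1 hB
  exact ⟨hiff.2 ⟨rfl, rfl⟩, fun _ _ => hiff.1⟩

theorem bmi_lemma_eight {n m : ℕ} (hn : 0 < n) (hm : 0 < m)
    (F0 : Matrix (Fin m) (Fin m) ℝ)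
    (K : Fin n → Matrix (Fin m) (Fin m) ℝ)
    (L : Fin n → Fin n → Matrix (Fin m) (Fin m) ℝ)
    (hF0 : F0.IsSymm) (hK : ∀ k, (K k).IsSymm)
    (hL : ∀ i j, (L i j).IsSymm) (hLsy : ∀ i j, L i j = L j i)
    (c xc : Fin n → ℝ) (k : Fin 3)
    (hn2 : k = 1 → 2 ≤ n)
    (ζ : ℝ)
    (hζ : ζ = if k = 0 then 1 else if k = 1 then 1/((n : ℝ) - 1)
          else 1/Real.sqrt (n : ℝ))
    (C : Set (Matrix (Fin n) (Fin n) ℝ))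
    (hC : C = if k = 0 then coneC1 n else if k = 1 then coneC2 n else coneC3 n)
    (η : ℝ) (hη : 0 < η)
    (xs : Fin n → ℝ)
    (hopt : IsOptPen F0 K L c xc η xs)
    (Λ : Matrix (Fin m) (Fin m) ℝ)
    (hKKT : KKT F0 K L c xc η xs Λ)
    (hbound : pencilNorm L * Λ.trace < ζ * η) :
    IsOptRel F0 K L c xc η C xs (vecMulVec xs xs) ∧
    ∀ y Y, IsOptRel F0 K L c xc η C y Y → y = xs ∧ Y = vecMulVec xs xs :=
  bmi_lemma_eight_general hn hLsy hn2 hζ hC hopt.1 hKKT hbound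
end
end

section
/- Equivalence of the parabolic relaxation constraint with convex quadratic inequalities: for every x ∈ ℝⁿ and every n×n real symmetric matrix X, the matrix X − xxᵀ belongs to C₃ if and only if for all i, j ∈ {1,…,n}: Xᵢᵢ + Xⱼⱼ − 2Xᵢⱼ ≥ (xᵢ − xⱼ)² and Xᵢᵢ + Xⱼⱼ + 2Xᵢⱼ ≥ (xᵢ + xⱼ)². -/
open Matrix

noncomputable section

/-
The quadratic forms of `H` and `xxᵀ` at `eᵢ ± eⱼ` are `Hᵢᵢ + Hⱼⱼ ± 2Hᵢⱼ` and `(xᵢ ± xⱼ)²`.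
A symmetric `H` lies in `C₃` exactly when its form is nonnegative at all these vectors; for
`H = X - xxᵀ` this says that the form of `X` dominates that of `xxᵀ` there.
-/

section Ring

variable {ι R : Type*}

theorem isSymm_vecMulVec_self [CommMagma R] (x : ι → R) : (vecMulVec x x).IsSymm :=
  transpose_vecMulVec x x

variable [CommRing R]

theorem sub_vecMulVec_self_diag_add_diag_sub_two_mul (X : Matrix ι ι R) (x : ι → R) (i j : ι) :
    (X - vecMulVec x x) i i + (X - vecMulVec x x) j j - 2 * (X - vecMulVec x x) i j =
      X i i + X j j - 2 * X i j - (x i - x j) ^ 2 := by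
  simp only [Matrix.sub_apply, vecMulVec_apply]
  ring

theorem sub_vecMulVec_self_diag_add_diag_add_two_mul (X : Matrix ι ι R) (x : ι → R) (i j : ι) :
    (X - vecMulVec x x) i i + (X - vecMulVec x x) j j + 2 * (X - vecMulVec x x) i j =
      X i i + X j j + 2 * X i j - (x i + x j) ^ 2 := by
  simp only [Matrix.sub_apply, vecMulVec_apply]
  ring

end Ring

theorem two_mul_abs_le_iff {R : Type*} [Ring R] [LinearOrder R] [IsStrictOrderedRing R] {a b : R} :
    2 * |a| ≤ b ↔ 0 ≤ b - 2 * a ∧ 0 ≤ b + 2 * a := by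
  have two_mul_abs : 2 * |a| = |2 * a| := by rw [abs_mul, abs_two]
  rw [two_mul_abs, abs_le', sub_nonneg, neg_le_iff_add_nonneg]

theorem mem_coneC3_iff {n : ℕ} {H : Matrix (Fin n) (Fin n) ℝ} :
    H ∈ coneC3 n ↔
      H.IsSymm ∧ ∀ i j, 0 ≤ H i i + H j j - 2 * H i j ∧ 0 ≤ H i i + H j j + 2 * H i j := by
  simp only [coneC3, Set.mem_ofPred_eq, two_mul_abs_le_iff]
  refine and_congr_right fun _ ↦ ⟨fun h i j ↦ (h i j).2, fun h i j ↦ ⟨?_, h i j⟩⟩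
  -- At `j = i` the second inequality reads `0 ≤ 4Hᵢᵢ`.
  linarith [(h i i).2]

theorem bmi_parabolic_characterization {n : ℕ}
    (x : Fin n → ℝ) (X : Matrix (Fin n) (Fin n) ℝ) (hX : X.IsSymm) :
    X - vecMulVec x x ∈ coneC3 n ↔
      ∀ i j, (x i - x j) ^ 2 ≤ X i i + X j j - 2 * X i j ∧
             (x i + x j) ^ 2 ≤ X i i + X j j + 2 * X i j := by
  have symm_sub : (X - vecMulVec x x).IsSymm := hX.sub (isSymm_vecMulVec_self x)
  simp only [mem_coneC3_iff, symm_sub, true_and, sub_vecMulVec_self_diag_add_diag_sub_two_mul,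
    sub_vecMulVec_self_diag_add_diag_add_two_mul, sub_nonneg]
end
end

section
/- Quantitative distance bound for optimal solutions of the penalized problem: suppose the BMI feasible set F is nonempty and η > 0. Then every optimal solution x* of the penalized problem (P_η) satisfies d_F(x̌) ≤ ‖x* − x̌‖₂ ≤ d_F(x̌) + ‖c‖₂/η. -/
/-!
Let `r` and `s` be the distances to `x₀` of a minimizer of `f + η * dist · x₀ ^ 2` and of a
competing feasible point, where `f` is `k`-Lipschitz. Comparing objective values gives
`η * (r ^ 2 - s ^ 2) ≤ k * (r + s)`, as the two points are at distance at most `r + s`. The factor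
`r + s` cancels, so `r ≤ s + k / η`; now let `s` run down to the distance from `x₀` to the feasible
set. A linear objective `c ⬝ᵥ ·` is `‖c‖₂`-Lipschitz by Cauchy–Schwarz.
-/

open Matrix

noncomputable section

open Metric WithLp
open scoped NNReal

lemma le_add_div_of_mul_sq_sub_sq_le {𝕜 : Type*} [Field 𝕜] [LinearOrder 𝕜] [IsStrictOrderedRing 𝕜]
    {r s k η : 𝕜} (hs : 0 ≤ s) (hk : 0 ≤ k) (hη : 0 < η)
    (h : η * (r ^ 2 - s ^ 2) ≤ k * (r + s)) : r ≤ s + k / η := by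
  rcases le_or_gt r s with hrs | hsr
  · exact hrs.trans (le_add_of_nonneg_right (by positivity))
  · have hpos : 0 < r + s := add_pos_of_pos_of_nonneg (hs.trans_lt hsr) hs
    have hfactor : (r - s) * η * (r + s) ≤ k * (r + s) := by linear_combination h
    rw [← sub_le_iff_le_add', le_div_iff₀ hη]
    exact le_of_mul_le_mul_right hfactor hpos

section PseudoMetricSpace

variable {α : Type*} [PseudoMetricSpace α] {S : Set α} {f : α → ℝ} {k : ℝ≥0} {η : ℝ} {x₀ x a : α}

lemma dist_le_dist_add_div_of_add_mul_dist_sq_le (hη : 0 < η) (hf : f a - f x ≤ k * dist a x)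
    (h : f x + η * dist x x₀ ^ 2 ≤ f a + η * dist a x₀ ^ 2) :
    dist x x₀ ≤ dist a x₀ + k / η := by
  refine le_add_div_of_mul_sq_sub_sq_le dist_nonneg k.coe_nonneg hη ?_
  calc η * (dist x x₀ ^ 2 - dist a x₀ ^ 2) ≤ f a - f x := by linear_combination h
    _ ≤ k * dist a x := hf
    _ ≤ k * (dist x x₀ + dist a x₀) := by
      gcongr
      exact (dist_triangle_right a x x₀).trans_eq (add_comm _ _)

theorem bmi_distance_bound_general (hη : 0 < η) (hf : LipschitzOnWith k f S) (hx : x ∈ S)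
    (hmin : IsMinOn (fun y ↦ f y + η * dist y x₀ ^ 2) S x) :
    infDist x₀ S ≤ dist x x₀ ∧ dist x x₀ ≤ infDist x₀ S + k / η := by
  refine ⟨dist_comm x₀ x ▸ infDist_le_dist_of_mem hx, ?_⟩
  rw [← sub_le_iff_le_add, le_infDist ⟨x, hx⟩]
  intro a ha
  have hfa : f a - f x ≤ k * dist a x := (le_abs_self _).trans (hf.dist_le_mul a ha x hx)
  rw [sub_le_iff_le_add, dist_comm x₀ a]
  exact dist_le_dist_add_div_of_add_mul_dist_sq_le hη hfa (hmin ha)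

end PseudoMetricSpace

lemma lipschitzWith_dotProduct_ofLp {ι : Type*} [Fintype ι] (c : ι → ℝ) :
    LipschitzWith ‖toLp 2 c‖₊ fun y : EuclideanSpace ℝ ι ↦ c ⬝ᵥ ofLp y := by
  refine LipschitzWith.of_dist_le_mul fun y z ↦ ?_
  have hinner : c ⬝ᵥ ofLp y - c ⬝ᵥ ofLp z = inner ℝ (toLp 2 c) (y - z) := by
    simp [EuclideanSpace.inner_eq_star_dotProduct, dotProduct_comm, ← dotProduct_sub]
  rw [Real.dist_eq, hinner, dist_eq_norm]
  exact abs_real_inner_le_norm _ _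

lemma vecNorm_eq_norm_toLp_s13 {k : ℕ} (u : Fin k → ℝ) : vecNorm u = ‖toLp 2 u‖ := by
  simp [vecNorm, EuclideanSpace.norm_eq]

lemma vecNorm_sub_eq_dist_toLp {k : ℕ} (u v : Fin k → ℝ) :
    vecNorm (u - v) = dist (toLp 2 u) (toLp 2 v) := by
  rw [vecNorm_eq_norm_toLp_s13, toLp_sub, dist_eq_norm]

section BMI

variable {n m : ℕ} {F0 : Matrix (Fin m) (Fin m) ℝ} {K : Fin n → Matrix (Fin m) (Fin m) ℝ}
  {L : Fin n → Fin n → Matrix (Fin m) (Fin m) ℝ}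

lemma distF_eq_infDist (x : Fin n → ℝ) :
    distF F0 K L x = infDist (toLp 2 x) (ofLp ⁻¹' feasSet F0 K L) := by
  rw [distF, infDist_eq_iInf, ← sInf_image']
  congr 1
  ext r
  simp only [vecNorm_sub_eq_dist_toLp]
  constructor
  · rintro ⟨a, ha, rfl⟩
    exact ⟨toLp 2 a, ha, rfl⟩
  · rintro ⟨y, hy, rfl⟩
    exact ⟨ofLp y, hy, rfl⟩

lemma IsOptPen.isMinOn {c xc xs : Fin n → ℝ} {η : ℝ} (h : IsOptPen F0 K L c xc η xs) :
    IsMinOn (fun y : EuclideanSpace ℝ (Fin n) ↦ c ⬝ᵥ ofLp y + η * dist y (toLp 2 xc) ^ 2)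
      (ofLp ⁻¹' feasSet F0 K L) (toLp 2 xs) := by
  refine isMinOn_iff.mpr fun y hy ↦ ?_
  simpa only [penObj, vecNorm_sub_eq_dist_toLp] using h.2 (ofLp y) hy

end BMI

theorem bmi_distance_bound {n m : ℕ} (hn : 0 < n) (hm : 0 < m)
    (F0 : Matrix (Fin m) (Fin m) ℝ)
    (K : Fin n → Matrix (Fin m) (Fin m) ℝ)
    (L : Fin n → Fin n → Matrix (Fin m) (Fin m) ℝ)
    (hF0 : F0.IsSymm) (hK : ∀ k, (K k).IsSymm)
    (hL : ∀ i j, (L i j).IsSymm) (hLsy : ∀ i j, L i j = L j i)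
    (c xc : Fin n → ℝ)
    (hne : (feasSet F0 K L).Nonempty)
    (η : ℝ) (hη : 0 < η) :
    ∀ xs : Fin n → ℝ, IsOptPen F0 K L c xc η xs →
      distF F0 K L xc ≤ vecNorm (xs - xc) ∧
      vecNorm (xs - xc) ≤ distF F0 K L xc + vecNorm c / η := by
  intro xs hxs
  rw [distF_eq_infDist, vecNorm_sub_eq_dist_toLp, vecNorm_eq_norm_toLp_s13]
  exact bmi_distance_bound_general hη (lipschitzWith_dotProduct_ofLp c).lipschitzOnWith hxs.1
    hxs.isMinOn
end
end
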